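/- Let r ≥ 4 and let p > 3 be prime, and let V be a quasi-Hermitian variety of PG(r,p^4) whose characteristic vector v^V belongs to C_p. If π is a plane of PG(r,p^4) with |π ∩ V| ≥ p^8 - p^5 + p^4 - p + 1, then either π is entirely contained in V, or |π ∩ V| = p^8 - p^5 + p^4 + 1 and every line of π meets π ∩ V in exactly 1, p^4 - p + 1, or p^4 + 1 points. -/

import Mathlib

/-!
Common framework: `ProjPoint F n` is the set of points of the projective space
PG(n-1, |F|) (so PG(r, q²) corresponds to `n = r + 1` and `Fintype.card F = q ^ 2`).
Projective subspaces of projective dimension `k` are the submodules of `Fin n → F`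
of `finrank` equal to `k + 1`; lines have finrank 2, planes finrank 3 and
hyperplanes finrank `n - 1 = r`.
-/

open Module Matrix

/-- The points of the projective space PG(n-1, |F|): one-dimensional subspaces
of `F^n`. -/
def ProjPoint (F : Type) [Field F] (n : ℕ) : Type :=
  {W : Submodule F (Fin n → F) // finrank F W = 1}

/-- The set of projective points lying in a given subspace `W`. -/
def pointsIn (F : Type) [Field F] (n : ℕ) (W : Submodule F (Fin n → F)) :
    Set (ProjPoint F n) :=
  {P | P.1 ≤ W}

/-- The number of points of `V` lying in the subspace `W`. -/
noncomputable def secant (F : Type) [Field F] (n : ℕ) (V : Set (ProjPoint F n))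
    (W : Submodule F (Fin n → F)) : ℕ :=
  (V ∩ pointsIn F n W).ncard

/-- The characteristic vector of a set of projective points, with values in `F_p`. -/
noncomputable def charVec (F : Type) [Field F] (p n : ℕ) (S : Set (ProjPoint F n)) :
    ProjPoint F n → ZMod p :=
  Set.indicator S 1

/-- `C_p`: the `F_p`-code spanned by the characteristic vectors of hyperplanes. -/
def hypCode (F : Type) [Field F] (p n : ℕ) :
    Submodule (ZMod p) (ProjPoint F n → ZMod p) :=
  Submodule.span (ZMod p)
    {v | ∃ H : Submodule F (Fin n → F), finrank F H = n - 1 ∧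
      v = charVec F p n (pointsIn F n H)}

/-- A quasi-Hermitian variety of PG(r, q²): it has the size of a non-singular
Hermitian variety and the same two intersection numbers with hyperplanes.
(All identities are stated multiplied through by `q² - 1`.) -/
def IsQuasiHermitian (F : Type) [Field F] (q r : ℕ)
    (V : Set (ProjPoint F (r + 1))) : Prop :=
  (V.ncard : ℤ) * ((q : ℤ) ^ 2 - 1)
      = ((q : ℤ) ^ (r + 1) + (-1) ^ r) * ((q : ℤ) ^ r - (-1) ^ r) ∧
  ∀ H : Submodule F (Fin (r + 1) → F), finrank F H = r →
    ((secant F (r + 1) V H : ℤ) * ((q : ℤ) ^ 2 - 1)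
        = ((q : ℤ) ^ r + (-1) ^ (r - 1)) * ((q : ℤ) ^ (r - 1) - (-1) ^ (r - 1)) ∨
     (secant F (r + 1) V H : ℤ) * ((q : ℤ) ^ 2 - 1)
        = ((q : ℤ) ^ 2 - 1)
          + (q : ℤ) ^ 2 * (((q : ℤ) ^ (r - 1) + (-1) ^ r) * ((q : ℤ) ^ (r - 2) - (-1) ^ r)))

/-- The zero set, in PG(n-1,|F|), of the Hermitian form `x ↦ xᵀ A x^(q)`. -/
def hermSet (F : Type) [Field F] (q n : ℕ) (A : Matrix (Fin n) (Fin n) F) :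
    Set (ProjPoint F n) :=
  {P | ∀ x ∈ P.1, ∑ i, ∑ j, x i * A i j * (x j) ^ q = 0}

/-- A non-singular Hermitian variety of PG(n-1, q²). -/
def IsNonsingHermitian (F : Type) [Field F] (q n : ℕ)
    (V : Set (ProjPoint F n)) : Prop :=
  ∃ A : Matrix (Fin n) (Fin n) F, IsUnit A.det ∧
    Aᵀ = A.map (fun a => a ^ q) ∧ V = hermSet F q n A

/-- A singular Hermitian variety of PG(n-1, q²) whose singular space (the radical
of the Hermitian form) has projective dimension `d`. -/
def IsSingularHermitian (F : Type) [Field F] (q n d : ℕ)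
    (S : Set (ProjPoint F n)) : Prop :=
  ∃ A : Matrix (Fin n) (Fin n) F,
    Aᵀ = A.map (fun a => a ^ q) ∧
    finrank F (LinearMap.ker (Matrix.toLin' Aᵀ)) = d + 1 ∧
    S = hermSet F q n A

/-- A `d`-singular quasi-Hermitian variety of PG(r, q²). -/
def IsSingularQuasiHermitian (F : Type) [Field F] (q r d : ℕ)
    (S : Set (ProjPoint F (r + 1))) : Prop :=
  ∃ S₀ : Set (ProjPoint F (r + 1)), IsSingularHermitian F q (r + 1) d S₀ ∧
    S.ncard = S₀.ncard ∧
    ∀ H : Submodule F (Fin (r + 1) → F), finrank F H = r →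
      ∃ H₀ : Submodule F (Fin (r + 1) → F), finrank F H₀ = r ∧
        secant F (r + 1) S H = secant F (r + 1) S₀ H₀

/-- `U` is a classical unital (Hermitian curve) of the plane `π` of PG(n-1, q²):
in some coordinatization `e` of `π`, it is the zero set of a non-degenerate
Hermitian form on `F³`. -/
def IsClassicalUnital (F : Type) [Field F] (q n : ℕ)
    (π : Submodule F (Fin n → F)) (U : Set (ProjPoint F n)) : Prop :=
  ∃ e : (Fin 3 → F) →ₗ[F] (Fin n → F), LinearMap.ker e = ⊥ ∧ LinearMap.range e = π ∧
    ∃ A : Matrix (Fin 3) (Fin 3) F, IsUnit A.det ∧ Aᵀ = A.map (fun a => a ^ q) ∧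
      U = {P | ∃ y : Fin 3 → F, y ≠ 0 ∧ P.1 = Submodule.span F {e y} ∧
        ∑ i, ∑ j, y i * A i j * (y j) ^ q = 0}

/-!
Write `q = |F|`. The complement `B` of `V` also lies in the code `C_p`, and `p` divides `|B|`. A
codeword has the same sum over all subspaces of projective dimension at least one, so `p` divides
every line section of `B`. The plane `π` contains `b ≤ pq + p` points of `B`.

Let `P` be a point of a line `ℓ` of `π` at which a codeword `c` vanishes, and let `ℓ` contain
`s ≤ q / 2` points of the support of `c`. In affine coordinates `(x, y)` of `π` with `P` at infinity
on the vertical lines, `∑ y, c(x, y) y ^ k` is a polynomial in `x` of degree at most `k` for every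
`k < q - 1`, because this holds for hyperplanes. The Hankel matrix of the moments
`k = 0, …, 2s - 2` has a determinant of degree at most `s(s - 1)` in `x`. It does not vanish at `ℓ`,
and at a line with `t < s` support points it has rank at most `t`, hence a zero of order at least
`s - t`. Summing over the lines through `P` shows that `π` contains at least `qs - s(s - 1)` support
points.

Applied to `B`, this leaves only `0` and `p` for line sections of size at most `q / 2`. Applied to
`B` minus a hyperplane through `ℓ`, it leaves only `q` for the larger ones. Counting `b` along the
lines through a point of `B` then gives `b = pq`.
-/

section PolynomialMatrix

open Polynomial

variable {ι : Type*} [Fintype ι] [DecidableEq ι]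

lemma natDegree_det_le_sum_add_sum {R : Type*} [CommRing R] {M : Matrix ι ι R[X]} {a b : ι → ℕ}
    (hM : ∀ i j, (M i j).natDegree ≤ a i + b j) :
    M.det.natDegree ≤ ∑ i, a i + ∑ j, b j := by
  rw [det_apply]
  refine natDegree_sum_le_of_forall_le _ _ fun σ _ ↦ ?_
  calc (Equiv.Perm.sign σ • ∏ j, M (σ j) j).natDegree
      ≤ (∏ j, M (σ j) j).natDegree := natDegree_smul_le _ _
    _ ≤ ∑ j, (M (σ j) j).natDegree := natDegree_prod_le _ _
    _ ≤ ∑ j, (a (σ j) + b j) := Finset.sum_le_sum fun j _ ↦ hM _ _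
    _ = ∑ i, a i + ∑ j, b j := by rw [Finset.sum_add_distrib, Equiv.sum_comp σ a]

lemma pow_card_dvd_det_of_forall_dvd {R : Type*} [CommRing R] {M : Matrix ι ι R} {f : R}
    {s : Finset ι} (hM : ∀ i ∈ s, ∀ j, f ∣ M i j) : f ^ s.card ∣ M.det := by
  have row_dvd : ∀ i j, (if i ∈ s then f else 1) ∣ M i j := fun i j ↦ by
    split_ifs with hi
    exacts [hM i hi j, one_dvd _]
  choose N hN using row_dvd
  have factor : M = of fun i j ↦ (if i ∈ s then f else 1) * of N i j := by
    ext i j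
    exact hN i j
  rw [factor, det_mul_column]
  simp

variable {K : Type*} [Field K]

lemma exists_det_eq_one_mul_mul_eq_diagonal (A : Matrix ι ι K) :
    ∃ (P Q : Matrix ι ι K) (D : ι → K), P.det = 1 ∧ Q.det = 1 ∧ P * A * Q = diagonal D := by
  obtain ⟨L, L', D, h⟩ := Pivot.exists_list_transvec_mul_mul_list_transvec_eq_diagonal A
  exact ⟨_, _, D, TransvectionStruct.det_toMatrix_prod L,
    TransvectionStruct.det_toMatrix_prod L', h⟩

-- Diagonalising `M(a)` over `K` makes every row with zero pivot divisible by `X - a`.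
lemma X_sub_C_pow_dvd_det (M : Matrix ι ι K[X]) (a : K) :
    (X - C a) ^ (Fintype.card ι - (M.map (eval a)).rank) ∣ M.det := by
  classical
  obtain ⟨P, Q, D, hP, hQ, hD⟩ := exists_det_eq_one_mul_mul_eq_diagonal (M.map (eval a))
  have rank_eq : (M.map (eval a)).rank = Fintype.card {i // D i ≠ 0} := by
    rw [← rank_diagonal, ← hD, rank_mul_eq_left_of_isUnit_det _ _ (by simp [hQ]),
      rank_mul_eq_right_of_isUnit_det _ _ (by simp [hP])]
  set N := C.mapMatrix P * M * C.mapMatrix Q with hN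
  have det_eq : N.det = M.det := by
    rw [hN, det_mul, det_mul, ← RingHom.map_det, ← RingHom.map_det, hP, hQ]
    simp
  have eval_eq : (evalRingHom a).mapMatrix N = diagonal D := by
    rw [hN, map_mul, map_mul, ← hD]
    congr 1 <;> [congr 1; skip] <;> ext <;> simp
  have row_dvd : ∀ i ∈ Finset.univ.filter (D · = 0), ∀ j, X - C a ∣ N i j := by
    intro i hi j
    have entry : (N i j).eval a = diagonal D i j := congrFun₂ eval_eq i j
    rw [dvd_iff_isRoot, IsRoot.def, entry, diagonal_apply, (Finset.mem_filter.mp hi).2, ite_self]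
  have card_eq : (Finset.univ.filter (D · = 0)).card =
      Fintype.card ι - (M.map (eval a)).rank := by
    rw [rank_eq, Fintype.card_subtype_compl, Fintype.card_subtype]
    exact (Nat.sub_sub_self (Finset.card_le_univ _)).symm
  rw [← card_eq, ← det_eq]
  exact pow_card_dvd_det_of_forall_dvd row_dvd

lemma sum_card_sub_rank_le_natDegree_det {M : Matrix ι ι K[X]} (hM : M.det ≠ 0) (T : Finset K) :
    ∑ a ∈ T, (Fintype.card ι - (M.map (eval a)).rank) ≤ M.det.natDegree := by
  have prod_dvd : ∏ a ∈ T, (X - C a) ^ (Fintype.card ι - (M.map (eval a)).rank) ∣ M.det :=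
    Finset.prod_dvd_of_coprime
      (fun a _ b _ hab ↦ (isCoprime_X_sub_C_of_isUnit_sub (sub_ne_zero.mpr hab).isUnit).pow)
      fun a _ ↦ X_sub_C_pow_dvd_det M a
  refine le_trans (le_of_eq ?_) (natDegree_le_of_dvd prod_dvd hM)
  rw [natDegree_prod _ _ fun a _ ↦ pow_ne_zero _ (X_sub_C_ne_zero a)]
  simp

end PolynomialMatrix

section Moments

/-- The Hankel matrix of the first `2 * s - 1` power moments of the weights `w` at the nodes `z`. -/
def momentMatrix {R Y : Type*} [CommSemiring R] [Fintype Y] (z w : Y → R) (s : ℕ) :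
    Matrix (Fin s) (Fin s) R :=
  of fun i j ↦ ∑ y, w y * z y ^ (i + j : ℕ)

variable {K Y : Type*} [Field K] [DecidableEq K] [Fintype Y]

lemma rank_momentMatrix_le (z w : Y → K) (s : ℕ) :
    (momentMatrix z w s).rank ≤ (Finset.univ.filter (w · ≠ 0)).card := by
  classical
  let W : Matrix Y (Fin s) K := of fun y i ↦ z y ^ (i : ℕ)
  have factor : momentMatrix z w s = Wᵀ * (diagonal w * W) := by
    ext i j
    rw [mul_apply]
    simp only [momentMatrix, of_apply, diagonal_mul, transpose_apply, W]
    exact Finset.sum_congr rfl fun y _ ↦ by ring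
  calc (momentMatrix z w s).rank ≤ (diagonal w).rank := by
        rw [factor]
        exact (rank_mul_le_right _ _).trans (rank_mul_le_left _ _)
    _ = _ := by rw [rank_diagonal, Fintype.card_subtype]

lemma det_momentMatrix_ne_zero {z : Y → K} (hz : Function.Injective z) (w : Y → K) :
    (momentMatrix z w (Finset.univ.filter (w · ≠ 0)).card).det ≠ 0 := by
  let e := ((Finset.univ.filter (w · ≠ 0)).equivFin).symm
  have factor : momentMatrix z w _ =
      (vandermonde fun k ↦ z (e k))ᵀ * diagonal (fun k ↦ w (e k)) *
        vandermonde fun k ↦ z (e k) := by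
    ext i j
    rw [mul_apply]
    simp only [momentMatrix, of_apply, mul_diagonal, transpose_apply, vandermonde_apply]
    rw [e.sum_comp fun y ↦ z y ^ (i : ℕ) * w y * z y ^ (j : ℕ),
      Finset.sum_coe_sort _ fun y ↦ z y ^ (i : ℕ) * w y * z y ^ (j : ℕ), Finset.sum_filter]
    refine Finset.sum_congr rfl fun y _ ↦ ?_
    split_ifs with hy
    · ring
    · rw [not_not.mp hy, zero_mul]
  have vandermonde_ne : (vandermonde fun k ↦ z (e k)).det ≠ 0 :=
    det_vandermonde_ne_zero_iff.mpr (hz.comp (Subtype.val_injective.comp e.injective))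
  rw [factor, det_mul, det_mul, det_transpose, det_diagonal]
  have weights_ne : ∏ k, w (e k) ≠ 0 :=
    Finset.prod_ne_zero_iff.mpr fun k _ ↦ (Finset.mem_filter.mp (e k).2).2
  exact mul_ne_zero (mul_ne_zero vandermonde_ne weights_ne) vandermonde_ne

open Polynomial in
lemma card_mul_le_sum_card_support_add {T : Finset K} {z : Y → K} (hz : Function.Injective z)
    {c : K → Y → K} {x₀ : K} (hx₀ : x₀ ∈ T) {s : ℕ}
    (hs : (Finset.univ.filter (c x₀ · ≠ 0)).card = s)
    (hc : ∀ k, k + 2 ≤ 2 * s → ∃ S : K[X], S.natDegree ≤ k ∧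
      ∀ x ∈ T, ∑ y, c x y * z y ^ k = S.eval x) :
    T.card * s ≤ ∑ x ∈ T, (Finset.univ.filter (c x · ≠ 0)).card + s * (s - 1) := by
  choose S S_deg S_eval using fun i j : Fin s ↦ hc (i + j) (by omega)
  set M : Matrix (Fin s) (Fin s) K[X] := of S
  have M_eval : ∀ x ∈ T, M.map (eval x) = momentMatrix z (c x) s := fun x hx ↦ by
    ext i j
    exact (S_eval i j x hx).symm
  have M_det_ne : M.det ≠ 0 := by
    have eval_ne : (M.map (eval x₀)).det ≠ 0 := by
      rw [M_eval x₀ hx₀, ← hs]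
      exact det_momentMatrix_ne_zero hz (c x₀)
    rintro h
    exact eval_ne (((evalRingHom x₀).map_det M).symm.trans (by rw [h, map_zero]))
  have M_det_deg : M.det.natDegree ≤ s * (s - 1) := by
    refine (natDegree_det_le_sum_add_sum S_deg).trans (le_of_eq ?_)
    rw [← two_mul, mul_comm, Fin.sum_univ_eq_sum_range (fun i ↦ i), Finset.sum_range_id_mul_two]
  calc T.card * s = ∑ _x ∈ T, s := by rw [Finset.sum_const, smul_eq_mul]
    _ ≤ ∑ x ∈ T, ((Finset.univ.filter (c x · ≠ 0)).card +
          (Fintype.card (Fin s) - (M.map (eval x)).rank)) := Finset.sum_le_sum fun x hx ↦ by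
        have := rank_momentMatrix_le z (c x) s
        rw [M_eval x hx, Fintype.card_fin]
        omega
    _ ≤ _ := by
        rw [Finset.sum_add_distrib]
        gcongr
        exact (sum_card_sub_rank_le_natDegree_det M_det_ne T).trans M_det_deg

end Moments

section Points

variable {F : Type} [Field F] {n : ℕ}

namespace ProjPoint

/-- The projective point with homogeneous coordinates `v`. -/
def mk (v : Fin n → F) (hv : v ≠ 0) : ProjPoint F n :=
  ⟨Submodule.span F {v}, finrank_span_singleton hv⟩

lemma mk_mem_pointsIn {v : Fin n → F} {hv : v ≠ 0} {W : Submodule F (Fin n → F)} :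
    mk v hv ∈ pointsIn F n W ↔ v ∈ W :=
  Submodule.span_singleton_le_iff_mem v W

lemma mem_pointsIn_val {P Q : ProjPoint F n} : P ∈ pointsIn F n Q.1 ↔ P = Q :=
  ⟨fun h ↦ Subtype.ext (Submodule.eq_of_le_of_finrank_eq h (P.2.trans Q.2.symm)),
    fun h ↦ h ▸ le_refl P.1⟩

lemma exists_mk_eq (P : ProjPoint F n) : ∃ (v : Fin n → F) (hv : v ≠ 0), mk v hv = P := by
  have hP : P.1 ≠ ⊥ := fun h ↦ by
    have := P.2
    rw [h, finrank_bot] at this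
    exact zero_ne_one this
  obtain ⟨v, hvP, hv⟩ := Submodule.exists_mem_ne_zero_of_ne_bot hP
  exact ⟨v, hv, mem_pointsIn_val.mp (mk_mem_pointsIn.mpr hvP)⟩

lemma mk_eq_mk_iff {v w : Fin n → F} {hv : v ≠ 0} {hw : w ≠ 0} :
    mk v hv = mk w hw ↔ ∃ a : F, a • w = v := by
  rw [← mem_pointsIn_val, mk_mem_pointsIn]
  exact Submodule.mem_span_singleton

instance [Finite F] : Finite (ProjPoint F n) :=
  inferInstanceAs (Finite (Subtype _))

end ProjPoint

lemma mem_pointsIn {P : ProjPoint F n} {W : Submodule F (Fin n → F)} :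
    P ∈ pointsIn F n W ↔ P.1 ≤ W :=
  Iff.rfl

lemma pointsIn_inf (W W' : Submodule F (Fin n → F)) :
    pointsIn F n (W ⊓ W') = pointsIn F n W ∩ pointsIn F n W' :=
  Set.ext fun _ ↦ mem_pointsIn.trans le_inf_iff

lemma ncard_pointsIn [Finite F] (W : Submodule F (Fin n → F)) :
    (pointsIn F n W).ncard = ∑ i ∈ Finset.range (finrank F W), Nat.card F ^ i := by
  let f : Projectivization F W → ProjPoint F n := fun x ↦
    ⟨x.submodule.map W.subtype, by rw [Submodule.finrank_map_subtype_eq, x.finrank_submodule]⟩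
  have f_inj : Function.Injective f := fun x y h ↦
    Projectivization.submodule_injective <|
      Submodule.map_injective_of_injective W.injective_subtype (congrArg Subtype.val h)
  have f_range : Set.range f = pointsIn F n W := by
    refine Set.Subset.antisymm (Set.range_subset_iff.mpr fun x ↦ W.map_subtype_le _) fun P hP ↦ ?_
    have map_comap : (P.1.comap W.subtype).map W.subtype = P.1 := by
      rw [Submodule.map_comap_subtype, inf_eq_right]
      exact hP
    have finrank_comap : finrank F (P.1.comap W.subtype) = 1 := by
      rw [← Submodule.finrank_map_subtype_eq, map_comap, P.2]
    exact ⟨Projectivization.mk'' _ finrank_comap, Subtype.ext <|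
      (congrArg (Submodule.map W.subtype) (Projectivization.submodule_mk'' _ _)).trans map_comap⟩
  rw [← f_range, ← Set.image_univ, Set.ncard_image_of_injective _ f_inj, Set.ncard_univ,
    Projectivization.card_of_finrank F W rfl]

lemma ncard_pointsIn_of_finrank_eq_two [Finite F] {ℓ : Submodule F (Fin n → F)}
    (hℓ : finrank F ℓ = 2) : (pointsIn F n ℓ).ncard = Nat.card F + 1 := by
  rw [ncard_pointsIn, hℓ, Finset.sum_range_succ, Finset.sum_range_one]
  ring

lemma ncard_pointsIn_of_finrank_eq_three [Finite F] {π : Submodule F (Fin n → F)}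
    (hπ : finrank F π = 3) : (pointsIn F n π).ncard = Nat.card F ^ 2 + Nat.card F + 1 := by
  rw [ncard_pointsIn, hπ, Finset.sum_range_succ, Finset.sum_range_succ, Finset.sum_range_one]
  ring

lemma natCast_card_eq_zero (F : Type*) [Field F] [Finite F] (p : ℕ) [CharP F p] :
    (Nat.card F : ZMod p) = 0 := by
  have := Fintype.ofFinite F
  rw [ZMod.natCast_eq_zero_iff, ← CharP.cast_eq_zero_iff F, Nat.card_eq_fintype_card]
  exact FiniteField.cast_card_eq_zero F

lemma dvd_card_of_charP (F : Type*) [Field F] [Finite F] (p : ℕ) [CharP F p] : p ∣ Nat.card F :=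
  (ZMod.natCast_eq_zero_iff _ _).mp (natCast_card_eq_zero F p)

lemma natCast_ncard_pointsIn [Finite F] (p : ℕ) [CharP F p] {W : Submodule F (Fin n → F)}
    (hW : finrank F W ≠ 0) : ((pointsIn F n W).ncard : ZMod p) = 1 := by
  obtain ⟨k, hk⟩ := Nat.exists_eq_succ_of_ne_zero hW
  rw [ncard_pointsIn, Nat.cast_sum, hk, Finset.sum_range_succ']
  simp [natCast_card_eq_zero F p]

lemma secant_top (S : Set (ProjPoint F n)) : secant F n S ⊤ = S.ncard :=
  congrArg Set.ncard (Set.inter_eq_left.mpr fun _ _ ↦ mem_pointsIn.mpr le_top)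

lemma secant_add_secant_compl [Finite F] (S : Set (ProjPoint F n)) (W : Submodule F (Fin n → F)) :
    secant F n S W + secant F n Sᶜ W = (pointsIn F n W).ncard := by
  rw [secant, secant, Set.inter_comm, Set.inter_comm Sᶜ, ← Set.sdiff_eq,
    Set.ncard_inter_add_ncard_sdiff_eq_ncard]

lemma secant_eq_zero_iff [Finite F] {S : Set (ProjPoint F n)} {W : Submodule F (Fin n → F)} :
    secant F n S W = 0 ↔ pointsIn F n W ⊆ Sᶜ := by
  rw [secant, Set.ncard_eq_zero, ← Set.disjoint_iff_inter_eq_empty, disjoint_comm,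
    Set.subset_compl_iff_disjoint_right]

lemma exists_notMem_of_secant_lt {S : Set (ProjPoint F n)} {W : Submodule F (Fin n → F)}
    (h : secant F n S W < (pointsIn F n W).ncard) : ∃ P ∈ pointsIn F n W, P ∉ S := by
  by_contra! hle
  exact h.ne (congrArg Set.ncard (Set.inter_eq_right.mpr hle))

lemma exists_mem_of_secant_ne_zero {S : Set (ProjPoint F n)} {W : Submodule F (Fin n → F)}
    (h : secant F n S W ≠ 0) : ∃ P ∈ pointsIn F n W, P ∈ S := by
  obtain ⟨P, hPS, hPW⟩ := Set.nonempty_of_ncard_ne_zero h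
  exact ⟨P, hPW, hPS⟩

end Points

section Code

variable {F : Type} [Field F] {p n : ℕ}

lemma exists_ker_eq_of_finrank_eq {H : Submodule F (Fin n → F)} (hn : n ≠ 0)
    (hH : finrank F H = n - 1) : ∃ φ : Dual F (Fin n → F), φ ≠ 0 ∧ LinearMap.ker φ = H := by
  have H_lt_top : H < ⊤ := lt_top_iff_ne_top.mpr fun h ↦ by
    rw [h, finrank_top, finrank_fin_fun] at hH
    omega
  obtain ⟨φ, hφ, hle⟩ := H.exists_le_ker_of_lt_top H_lt_top
  refine ⟨φ, hφ, (Submodule.eq_of_le_of_finrank_eq hle ?_).symm⟩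
  have := Dual.finrank_ker_add_one_of_ne_zero hφ
  rw [finrank_fin_fun] at this
  omega

lemma charVec_pointsIn_ker_mem_hypCode {φ : Dual F (Fin n → F)} (hφ : φ ≠ 0) :
    charVec F p n (pointsIn F n (LinearMap.ker φ)) ∈ hypCode F p n := by
  refine Submodule.subset_span ⟨_, ?_, rfl⟩
  have := Dual.finrank_ker_add_one_of_ne_zero hφ
  rw [finrank_fin_fun] at this
  omega

lemma charVec_pointsIn_ker_mk [DecidableEq F] (φ : Dual F (Fin n → F)) {v : Fin n → F}
    (hv : v ≠ 0) : charVec F p n (pointsIn F n (LinearMap.ker φ)) (ProjPoint.mk v hv) =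
      if φ v = 0 then 1 else 0 := by
  classical
  rw [charVec, Set.indicator_apply, Pi.one_apply]
  exact if_congr (ProjPoint.mk_mem_pointsIn.trans LinearMap.mem_ker) rfl rfl

lemma support_charVec [Nontrivial (ZMod p)] (S : Set (ProjPoint F n)) :
    Function.support (charVec F p n S) = S := by
  rw [charVec, Set.support_indicator, Function.support_one, Set.inter_univ]

lemma support_charVec_sub_charVec [Nontrivial (ZMod p)] (S T : Set (ProjPoint F n)) :
    Function.support (charVec F p n S - charVec F p n T) = symmDiff S T := by
  classical
  ext P
  simp only [charVec, Function.mem_support, Pi.sub_apply, Set.indicator_apply, Pi.one_apply,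
    Set.mem_symmDiff]
  split_ifs <;> simp [*]

lemma finsum_mem_charVec [Finite F] (S : Set (ProjPoint F n)) (W : Submodule F (Fin n → F)) :
    ∑ᶠ P ∈ pointsIn F n W, charVec F p n S P = (secant F n S W : ZMod p) := by
  rw [secant, charVec, finsum_mem_def, Set.indicator_indicator, ← finsum_mem_def, Set.inter_comm,
    finsum_mem_eq_finite_toFinset_sum _ (Set.toFinite _)]
  simp [Set.ncard_eq_toFinset_card _ (Set.toFinite _)]

lemma natCast_secant_pointsIn [Finite F] [CharP F p]
    {H W : Submodule F (Fin n → F)} (hH : finrank F H = n - 1) (hW : 2 ≤ finrank F W) :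
    (secant F n (pointsIn F n H) W : ZMod p) = 1 := by
  rw [secant, ← pointsIn_inf]
  refine natCast_ncard_pointsIn p ?_
  have dim_formula := Submodule.finrank_sup_add_finrank_inf_eq H W
  have := (H ⊔ W).finrank_le
  have := W.finrank_le
  rw [finrank_fin_fun] at *
  omega

lemma finsum_mem_pointsIn_eq_of_mem_hypCode [Finite F] [CharP F p]
    {c : ProjPoint F n → ZMod p} (hc : c ∈ hypCode F p n) {W W' : Submodule F (Fin n → F)}
    (hW : 2 ≤ finrank F W) (hW' : 2 ≤ finrank F W') :
    ∑ᶠ P ∈ pointsIn F n W, c P = ∑ᶠ P ∈ pointsIn F n W', c P := by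
  rw [hypCode] at hc
  induction hc using Submodule.span_induction with
  | mem c hc =>
    obtain ⟨H, hH, rfl⟩ := hc
    rw [finsum_mem_charVec, finsum_mem_charVec, natCast_secant_pointsIn hH hW,
      natCast_secant_pointsIn hH hW']
  | zero => simp
  | add c d _ _ hc hd =>
    simp only [Pi.add_apply, finsum_mem_add_distrib (Set.toFinite _), hc, hd]
  | smul a c _ hc =>
    simp only [Pi.smul_apply, ← smul_finsum_mem (Set.toFinite _), hc]

lemma dvd_secant_of_charVec_mem_hypCode [Finite F] [CharP F p]
    {B : Set (ProjPoint F n)} (hB : charVec F p n B ∈ hypCode F p n) (hcard : p ∣ B.ncard)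
    {W : Submodule F (Fin n → F)} (hW : 2 ≤ finrank F W) : p ∣ secant F n B W := by
  have hn : 2 ≤ finrank F (⊤ : Submodule F (Fin n → F)) :=
    hW.trans (Submodule.finrank_mono le_top)
  rw [← ZMod.natCast_eq_zero_iff, ← finsum_mem_charVec,
    finsum_mem_pointsIn_eq_of_mem_hypCode hB hW hn, finsum_mem_charVec, secant_top,
    ZMod.natCast_eq_zero_iff]
  exact hcard

-- Each point lies on `1` or `q + 1` of the hyperplanes through a fixed subspace of codimension 2.
lemma one_mem_hypCode [Finite F] [CharP F p] (hn : 2 ≤ n) : 1 ∈ hypCode F p n := by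
  classical
  have := Fintype.ofFinite F
  obtain ⟨n, rfl⟩ := Nat.exists_eq_add_of_le' hn
  let φ : Dual F (Fin (n + 2) → F) := LinearMap.proj 0
  let ψ : Dual F (Fin (n + 2) → F) := LinearMap.proj 1
  have ψ_ne : ψ ≠ 0 := fun h ↦ by
    simpa [ψ] using DFunLike.congr_fun h (Pi.single 1 1)
  have pencil_ne (t : F) : φ + t • ψ ≠ 0 := fun h ↦ by
    simpa [φ, ψ] using DFunLike.congr_fun h (Pi.single 0 1)
  have one_eq : 1 = charVec F p (n + 2) (pointsIn F (n + 2) (LinearMap.ker ψ)) +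
      ∑ t : F, charVec F p (n + 2) (pointsIn F (n + 2) (LinearMap.ker (φ + t • ψ))) := by
    ext P
    obtain ⟨v, hv, rfl⟩ := P.exists_mk_eq
    rw [Pi.add_apply, Finset.sum_apply, charVec_pointsIn_ker_mk]
    simp only [charVec_pointsIn_ker_mk, LinearMap.add_apply, LinearMap.smul_apply, smul_eq_mul]
    by_cases h : ψ v = 0
    · have card_eq_zero : (Fintype.card F : ZMod p) = 0 := by
        rw [← Nat.card_eq_fintype_card, natCast_card_eq_zero]
      simp [h, card_eq_zero]
    · have solve (t : F) : φ v + t * ψ v = 0 ↔ t = -φ v / ψ v := by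
        rw [eq_div_iff h, add_comm, ← eq_neg_iff_add_eq_zero]
      simp [h, solve]
  rw [one_eq]
  exact add_mem (charVec_pointsIn_ker_mem_hypCode ψ_ne)
    (sum_mem fun t _ ↦ charVec_pointsIn_ker_mem_hypCode (pencil_ne t))

lemma charVec_compl_mem_hypCode [Finite F] [CharP F p] (hn : 2 ≤ n)
    {S : Set (ProjPoint F n)} (hS : charVec F p n S ∈ hypCode F p n) :
    charVec F p n Sᶜ ∈ hypCode F p n := by
  rw [charVec, Set.indicator_compl]
  exact sub_mem (one_mem_hypCode hn) hS

variable [Fintype F]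

open Polynomial in
lemma exists_polynomial_moment [DecidableEq F] (a b d : F) {k : ℕ}
    (hk : k < Fintype.card F - 1) :
    ∃ S : F[X], S.natDegree ≤ k ∧
      ∀ x, ∑ y, (if a + x * b + y * d = 0 then 1 else 0) * y ^ k = S.eval x := by
  by_cases hd : d = 0
  · refine ⟨0, natDegree_zero.trans_le k.zero_le, fun x ↦ ?_⟩
    simp only [hd, mul_zero, add_zero, ← Finset.mul_sum,
      FiniteField.sum_pow_lt_card_sub_one F k hk, eval_zero]
  · have solve : ∀ x y, a + x * b + y * d = 0 ↔ y = -a / d + -b / d * x := fun x y ↦ by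
      rw [div_mul_eq_mul_div, ← add_div, eq_div_iff hd]
      constructor <;> exact fun h ↦ by linear_combination h
    refine ⟨(C (-a / d) + C (-b / d) * X) ^ k,
      (natDegree_pow_le_of_le (m := 1) k (by compute_degree)).trans_eq (mul_one k), fun x ↦ ?_⟩
    simp [solve]

open Polynomial in
lemma exists_polynomial_moment_of_mem_hypCode [CharP F p]
    {e₀ e₁ e₂ : Fin n → F} (he : ∀ x y : F, e₀ + x • e₁ + y • e₂ ≠ 0) {k : ℕ}
    (hk : k < Fintype.card F - 1) {c : ProjPoint F n → ZMod p} (hc : c ∈ hypCode F p n) :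
    ∃ S : F[X], S.natDegree ≤ k ∧ ∀ x,
      ∑ y, ZMod.castHom dvd_rfl F (c (ProjPoint.mk _ (he x y))) * y ^ k = S.eval x := by
  classical
  have hn : n ≠ 0 := by
    rintro rfl
    exact he 0 0 (Subsingleton.elim _ _)
  rw [hypCode] at hc
  induction hc using Submodule.span_induction with
  | mem c hc =>
    obtain ⟨H, hH, rfl⟩ := hc
    obtain ⟨φ, -, rfl⟩ := exists_ker_eq_of_finrank_eq hn hH
    simp only [charVec_pointsIn_ker_mk, apply_ite, map_one, map_zero]
    simpa using exists_polynomial_moment (φ e₀) (φ e₁) (φ e₂) hk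
  | zero => exact ⟨0, by simp, fun x ↦ by simp⟩
  | add c d _ _ hc hd =>
    obtain ⟨S, S_deg, S_eval⟩ := hc
    obtain ⟨T, T_deg, T_eval⟩ := hd
    refine ⟨S + T, natDegree_add_le_of_degree_le S_deg T_deg, fun x ↦ ?_⟩
    simp only [Pi.add_apply, map_add, add_mul, Finset.sum_add_distrib, S_eval, T_eval, eval_add]
  | smul a c _ hc =>
    obtain ⟨S, S_deg, S_eval⟩ := hc
    refine ⟨C (ZMod.castHom dvd_rfl F a) * S, (natDegree_C_mul_le _ _).trans S_deg, fun x ↦ ?_⟩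
    simp only [Pi.smul_apply, smul_eq_mul, map_mul, mul_assoc, ← Finset.mul_sum, S_eval, eval_mul,
      eval_C]

end Code

section Lines

variable {F : Type} [Field F] {n : ℕ}

lemma add_smul_ne_zero_of_notMem_span {f g : Fin n → F} (hf : f ∉ Submodule.span F {g}) (y : F) :
    f + y • g ≠ 0 := fun h ↦
  hf <| Submodule.mem_span_singleton.mpr ⟨-y, by rw [neg_smul, eq_neg_of_add_eq_zero_left h]⟩

lemma finrank_sup_of_ne {P Q : ProjPoint F n} (h : P ≠ Q) : finrank F ↥(P.1 ⊔ Q.1) = 2 := by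
  have inf_eq_bot : P.1 ⊓ Q.1 = ⊥ := by
    by_contra inf_ne
    obtain ⟨v, ⟨hvP, hvQ⟩, hv⟩ := Submodule.exists_mem_ne_zero_of_ne_bot inf_ne
    have eq_P : ProjPoint.mk v hv = P :=
      ProjPoint.mem_pointsIn_val.mp (ProjPoint.mk_mem_pointsIn.mpr hvP)
    have eq_Q : ProjPoint.mk v hv = Q :=
      ProjPoint.mem_pointsIn_val.mp (ProjPoint.mk_mem_pointsIn.mpr hvQ)
    exact h (eq_P.symm.trans eq_Q)
  have := Submodule.finrank_sup_add_finrank_inf_eq P.1 Q.1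
  rwa [inf_eq_bot, finrank_bot, P.2, Q.2] at this

lemma sup_eq_of_finrank_eq_two {P Q : ProjPoint F n} (h : P ≠ Q) {ℓ : Submodule F (Fin n → F)}
    (hℓ : finrank F ℓ = 2) (hP : P ∈ pointsIn F n ℓ) (hQ : Q ∈ pointsIn F n ℓ) :
    P.1 ⊔ Q.1 = ℓ :=
  Submodule.eq_of_le_of_finrank_eq (sup_le hP hQ) ((finrank_sup_of_ne h).trans hℓ.symm)

lemma finrank_span_pair_of_notMem_span {f g : Fin n → F} (hg : g ≠ 0)
    (hf : f ∉ Submodule.span F {g}) : finrank F (Submodule.span F {f, g}) = 2 := by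
  have f_ne : f ≠ 0 := by
    rintro rfl
    exact hf (zero_mem _)
  have mk_ne : ProjPoint.mk f f_ne ≠ ProjPoint.mk g hg := fun h ↦
    hf (Submodule.mem_span_singleton.mpr (ProjPoint.mk_eq_mk_iff.mp h))
  have span_eq : Submodule.span F {f, g} = (ProjPoint.mk f f_ne).1 ⊔ (ProjPoint.mk g hg).1 :=
    Submodule.span_insert f {g}
  rw [span_eq, finrank_sup_of_ne mk_ne]

lemma mk_add_smul_injective {f g : Fin n → F} (hg : g ≠ 0) (hf : f ∉ Submodule.span F {g}) :
    Function.Injective fun y : F ↦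
      ProjPoint.mk (f + y • g) (add_smul_ne_zero_of_notMem_span hf y) := by
  intro y z h
  have indep : LinearIndependent F ![g, f] := (LinearIndependent.pair_iff' hg).mpr
    fun a ha ↦ hf (Submodule.mem_span_singleton.mpr ⟨a, ha⟩)
  obtain ⟨a, ha⟩ := ProjPoint.mk_eq_mk_iff.mp h
  obtain ⟨hyz, ha₁⟩ := LinearIndependent.pair_iff.mp indep (y - a * z) (1 - a)
    (by linear_combination (norm := module) -ha)
  linear_combination hyz - z * ha₁

lemma mem_pointsIn_span_pair_iff {f g : Fin n → F} (hg : g ≠ 0) (hf : f ∉ Submodule.span F {g})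
    {P : ProjPoint F n} : P ∈ pointsIn F n (Submodule.span F {f, g}) ↔
      P = ProjPoint.mk g hg ∨
        ∃ y, ProjPoint.mk (f + y • g) (add_smul_ne_zero_of_notMem_span hf y) = P := by
  obtain ⟨v, hv, rfl⟩ := P.exists_mk_eq
  rw [ProjPoint.mk_mem_pointsIn, Submodule.mem_span_pair]
  constructor
  · rintro ⟨a, b, rfl⟩
    by_cases ha : a = 0
    · exact .inl (ProjPoint.mk_eq_mk_iff.mpr ⟨b, by rw [ha, zero_smul, zero_add]⟩)
    · refine .inr ⟨a⁻¹ * b, ProjPoint.mk_eq_mk_iff.mpr ⟨a⁻¹, ?_⟩⟩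
      rw [smul_add, smul_smul, smul_smul, inv_mul_cancel₀ ha, one_smul]
  · rintro (h | ⟨y, h⟩)
    · obtain ⟨b, rfl⟩ := ProjPoint.mk_eq_mk_iff.mp h
      exact ⟨0, b, by rw [zero_smul, zero_add]⟩
    · obtain ⟨a, rfl⟩ := ProjPoint.mk_eq_mk_iff.mp h.symm
      exact ⟨a, a * y, by rw [smul_add, smul_smul]⟩

lemma secant_span_pair {f g : Fin n → F} (hg : g ≠ 0) (hf : f ∉ Submodule.span F {g})
    {S : Set (ProjPoint F n)} (hS : ProjPoint.mk g hg ∉ S) :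
    secant F n S (Submodule.span F {f, g}) =
      {y | ProjPoint.mk (f + y • g) (add_smul_ne_zero_of_notMem_span hf y) ∈ S}.ncard := by
  rw [secant, ← Set.ncard_image_of_injective _ (mk_add_smul_injective hg hf)]
  congr 1
  ext P
  constructor
  · rintro ⟨hPS, hP⟩
    obtain rfl | ⟨y, rfl⟩ := (mem_pointsIn_span_pair_iff hg hf).mp hP
    · exact absurd hPS hS
    · exact ⟨y, hPS, rfl⟩
  · rintro ⟨y, hy, rfl⟩
    exact ⟨hy, (mem_pointsIn_span_pair_iff hg hf).mpr (.inr ⟨y, rfl⟩)⟩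

variable [Finite F]

lemma secant_sdiff_singleton_add_one {S : Set (ProjPoint F n)} {P : ProjPoint F n} (hPS : P ∈ S)
    {W : Submodule F (Fin n → F)} (hPW : P ∈ pointsIn F n W) :
    secant F n (S \ {P}) W + 1 = secant F n S W := by
  rw [secant, secant, Set.sdiff_inter_right_comm,
    Set.ncard_sdiff_singleton_add_one (Set.mem_inter hPS hPW)]

/-- The lines through the point `P` contained in the subspace `π`. -/
noncomputable def pencil (P : ProjPoint F n) (π : Submodule F (Fin n → F)) :
    Finset (Submodule F (Fin n → F)) :=
  (Set.toFinite {ℓ | P ∈ pointsIn F n ℓ ∧ ℓ ≤ π ∧ finrank F ℓ = 2}).toFinset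

variable {P : ProjPoint F n} {π : Submodule F (Fin n → F)}

lemma mem_pencil {ℓ : Submodule F (Fin n → F)} :
    ℓ ∈ pencil P π ↔ P ∈ pointsIn F n ℓ ∧ ℓ ≤ π ∧ finrank F ℓ = 2 :=
  Set.Finite.mem_toFinset _

lemma sum_secant_pencil_of_notMem (hP : P ∈ pointsIn F n π) {S : Set (ProjPoint F n)}
    (hPS : P ∉ S) : ∑ ℓ ∈ pencil P π, secant F n S ℓ = secant F n S π := by
  have disjoint : (pencil P π : Set (Submodule F (Fin n → F))).PairwiseDisjoint
      fun ℓ ↦ S ∩ pointsIn F n ℓ := by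
    intro ℓ hℓ m hm hne
    obtain ⟨hPℓ, -, hℓ⟩ := mem_pencil.mp hℓ
    obtain ⟨hPm, -, hm⟩ := mem_pencil.mp hm
    refine Set.disjoint_left.mpr fun Q ⟨hQS, hQℓ⟩ ⟨_, hQm⟩ ↦ hne ?_
    have hPQ : P ≠ Q := fun h ↦ hPS (h ▸ hQS)
    exact (sup_eq_of_finrank_eq_two hPQ hℓ hPℓ hQℓ).symm.trans
      (sup_eq_of_finrank_eq_two hPQ hm hPm hQm)
  have cover : ⋃ ℓ ∈ (pencil P π : Set (Submodule F (Fin n → F))), S ∩ pointsIn F n ℓ =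
      S ∩ pointsIn F n π := by
    refine Set.Subset.antisymm (Set.iUnion₂_subset fun ℓ hℓ Q ⟨hQS, hQℓ⟩ ↦
      ⟨hQS, le_trans hQℓ (mem_pencil.mp hℓ).2.1⟩) fun Q ⟨hQS, hQ⟩ ↦ ?_
    have hPQ : P ≠ Q := fun h ↦ hPS (h ▸ hQS)
    have line_mem : P.1 ⊔ Q.1 ∈ pencil P π :=
      mem_pencil.mpr ⟨mem_pointsIn.mpr le_sup_left, sup_le hP hQ, finrank_sup_of_ne hPQ⟩
    exact Set.mem_biUnion line_mem ⟨hQS, mem_pointsIn.mpr le_sup_right⟩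
  rw [secant, ← cover, (Finset.finite_toSet _).ncard_biUnion (fun _ _ ↦ Set.toFinite _) disjoint,
    finsum_mem_coe_finset]
  rfl

lemma card_pencil (hP : P ∈ pointsIn F n π) (hπ : finrank F π = 3) :
    (pencil P π).card = Nat.card F + 1 := by
  have line_secant : ∀ ℓ ∈ pencil P π, secant F n (Set.univ \ {P}) ℓ = Nat.card F := fun ℓ hℓ ↦ by
    obtain ⟨hPℓ, -, hℓ⟩ := mem_pencil.mp hℓ
    have := secant_sdiff_singleton_add_one (Set.mem_univ P) hPℓ
    rw [secant, secant, Set.univ_inter, ncard_pointsIn_of_finrank_eq_two hℓ] at this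
    exact Nat.succ_injective this
  have plane_secant := secant_sdiff_singleton_add_one (Set.mem_univ P) hP
  rw [← sum_secant_pencil_of_notMem hP (by simp), Finset.sum_congr rfl line_secant,
    Finset.sum_const, smul_eq_mul, secant, Set.univ_inter,
    ncard_pointsIn_of_finrank_eq_three hπ] at plane_secant
  refine Nat.eq_of_mul_eq_mul_right (Nat.card_pos (α := F)) ?_
  linarith

lemma sum_secant_pencil_of_mem (hP : P ∈ pointsIn F n π) (hπ : finrank F π = 3)
    {S : Set (ProjPoint F n)} (hPS : P ∈ S) :
    ∑ ℓ ∈ pencil P π, secant F n S ℓ = secant F n S π + Nat.card F := by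
  calc ∑ ℓ ∈ pencil P π, secant F n S ℓ
      = ∑ ℓ ∈ pencil P π, (secant F n (S \ {P}) ℓ + 1) := Finset.sum_congr rfl fun ℓ hℓ ↦
        (secant_sdiff_singleton_add_one hPS (mem_pencil.mp hℓ).1).symm
    _ = secant F n (S \ {P}) π + (Nat.card F + 1) := by
        rw [Finset.sum_add_distrib, sum_secant_pencil_of_notMem hP (by simp), Finset.sum_const,
          card_pencil hP hπ, smul_eq_mul, mul_one]
    _ = secant F n S π + Nat.card F := by
        rw [← secant_sdiff_singleton_add_one hPS hP]
        ring

end Lines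

section PlaneInequality

variable {F : Type} [Field F] {p n : ℕ}

lemma add_smul_notMem_span_singleton {e f g : Fin n → F} (hf : f ∉ Submodule.span F {g})
    (he : e ∉ Submodule.span F {f, g}) (x : F) : f + x • e ∉ Submodule.span F {g} := by
  intro h
  have smul_mem : x • e ∈ Submodule.span F {f, g} := by
    rw [← add_sub_cancel_left f (x • e)]
    exact sub_mem (Submodule.span_mono (Set.subset_insert f {g}) h)
      (Submodule.mem_span_of_mem (Set.mem_insert f {g}))
  have x_eq_zero : x = 0 := by
    by_contra hx
    exact he (((Submodule.span F {f, g}).smul_mem_iff hx).mp smul_mem)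
  rw [x_eq_zero, zero_smul, add_zero] at h
  exact hf h

lemma span_pair_add_smul_injective {e f g : Fin n → F} (hg : g ≠ 0)
    (hf : f ∉ Submodule.span F {g}) (he : e ∉ Submodule.span F {f, g}) :
    Function.Injective fun x : F ↦ Submodule.span F {f + x • e, g} := by
  intro x y hxy
  by_contra hne
  set m := Submodule.span F {f + x • e, g}
  have x_mem : f + x • e ∈ m := Submodule.subset_span (by simp)
  have y_mem : f + y • e ∈ m := by
    rw [show m = _ from hxy]
    exact Submodule.subset_span (by simp)
  have e_mem : e ∈ m := by
    rw [← m.smul_mem_iff (sub_ne_zero.mpr hne),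
      show (x - y) • e = (f + x • e) - (f + y • e) by module]
    exact sub_mem x_mem y_mem
  have f_mem : f ∈ m := by
    rw [← add_sub_cancel_right f (x • e)]
    exact sub_mem x_mem (m.smul_mem x e_mem)
  have g_mem : g ∈ m := Submodule.subset_span (by simp)
  have span_eq : Submodule.span F {f, g} = m := by
    refine Submodule.eq_of_le_of_finrank_eq
      (Submodule.span_le.mpr (Set.insert_subset f_mem (Set.singleton_subset_iff.mpr g_mem))) ?_
    rw [finrank_span_pair_of_notMem_span hg hf,
      finrank_span_pair_of_notMem_span hg (add_smul_notMem_span_singleton hf he x)]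
  exact he (span_eq ▸ e_mem)

lemma sum_secant_span_pair_le [Fintype F] {π : Submodule F (Fin n → F)} {e f g : Fin n → F}
    (hg : g ≠ 0) (hf : f ∉ Submodule.span F {g}) (he : e ∉ Submodule.span F {f, g})
    (hgπ : g ∈ π) (hfπ : f ∈ π) (heπ : e ∈ π) {S : Set (ProjPoint F n)}
    (hS : ProjPoint.mk g hg ∉ S) :
    ∑ x : F, secant F n S (Submodule.span F {f + x • e, g}) ≤ secant F n S π := by
  classical
  have line_mem (x : F) : Submodule.span F {f + x • e, g} ∈ pencil (ProjPoint.mk g hg) π := by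
    refine mem_pencil.mpr ⟨ProjPoint.mk_mem_pointsIn.mpr (Submodule.subset_span (by simp)),
      Submodule.span_le.mpr ?_,
      finrank_span_pair_of_notMem_span hg (add_smul_notMem_span_singleton hf he x)⟩
    exact Set.insert_subset (add_mem hfπ (π.smul_mem x heπ)) (Set.singleton_subset_iff.mpr hgπ)
  rw [← sum_secant_pencil_of_notMem (ProjPoint.mk_mem_pointsIn.mpr hgπ) hS,
    ← Finset.sum_image (f := secant F n S)
      (span_pair_add_smul_injective hg hf he).injOn]
  exact Finset.sum_le_sum_of_subset (Finset.image_subset_iff.mpr fun x _ ↦ line_mem x)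

lemma exists_frame {ℓ π : Submodule F (Fin n → F)} (hℓ : finrank F ℓ = 2) (hπ : finrank F π = 3)
    (hℓπ : ℓ ≤ π) {P : ProjPoint F n} (hP : P ∈ pointsIn F n ℓ) :
    ∃ (e f g : Fin n → F) (hg : g ≠ 0), P = ProjPoint.mk g hg ∧ f ∉ Submodule.span F {g} ∧
      ℓ = Submodule.span F {f, g} ∧ e ∈ π ∧ e ∉ ℓ := by
  obtain ⟨g, hg, rfl⟩ := P.exists_mk_eq
  have P_lt : Submodule.span F {g} < ℓ :=
    lt_of_le_of_ne hP fun h ↦ by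
      have := finrank_span_singleton (K := F) hg
      rw [h] at this
      omega
  have ℓ_lt : ℓ < π := lt_of_le_of_ne hℓπ fun h ↦ by
    rw [h] at hℓ
    omega
  obtain ⟨f, hfℓ, hf⟩ := SetLike.exists_of_lt P_lt
  obtain ⟨e, heπ, he⟩ := SetLike.exists_of_lt ℓ_lt
  refine ⟨e, f, g, hg, rfl, hf, (Submodule.eq_of_le_of_finrank_eq ?_ ?_).symm, heπ, he⟩
  · exact Submodule.span_le.mpr
      (Set.insert_subset hfℓ (Set.singleton_subset_iff.mpr (ProjPoint.mk_mem_pointsIn.mp hP)))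
  · rw [finrank_span_pair_of_notMem_span hg hf, hℓ]

variable [Finite F] [CharP F p]

lemma card_mul_secant_support_le {c : ProjPoint F n → ZMod p} (hc : c ∈ hypCode F p n)
    {ℓ π : Submodule F (Fin n → F)} (hℓ : finrank F ℓ = 2) (hπ : finrank F π = 3) (hℓπ : ℓ ≤ π)
    {P : ProjPoint F n} (hP : P ∈ pointsIn F n ℓ) (hcP : c P = 0)
    {s : ℕ} (hs : secant F n (Function.support c) ℓ = s) (hsq : 2 * s ≤ Nat.card F) :
    Nat.card F * s ≤ secant F n (Function.support c) π + s * (s - 1) := by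
  classical
  have := Fintype.ofFinite F
  have : Fact p.Prime := ⟨CharP.char_is_prime F p⟩
  rw [Nat.card_eq_fintype_card] at *
  obtain ⟨e, f, g, hg, rfl, hf, rfl, heπ, he⟩ := exists_frame hℓ hπ hℓπ hP
  have hS : ProjPoint.mk g hg ∉ Function.support c := Function.notMem_support.mpr hcP
  have frame_ne (x y : F) : f + x • e + y • g ≠ 0 :=
    add_smul_ne_zero_of_notMem_span (add_smul_notMem_span_singleton hf he x) y
  let w (x y : F) : F := ZMod.castHom dvd_rfl F (c (ProjPoint.mk _ (frame_ne x y)))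
  have card_support (x : F) : (Finset.univ.filter (w x · ≠ 0)).card =
      secant F n (Function.support c) (Submodule.span F {f + x • e, g}) := by
    rw [secant_span_pair hg (add_smul_notMem_span_singleton hf he x) hS,
      Set.ncard_eq_toFinset_card', Set.toFinset_ofPred]
    exact congrArg Finset.card (Finset.filter_congr fun y _ ↦ map_ne_zero _)
  have key := card_mul_le_sum_card_support_add (T := Finset.univ) Function.injective_id
    (c := w) (Finset.mem_univ 0) (s := s) (by rw [card_support, zero_smul, add_zero, hs])
    fun k hk ↦ (exists_polynomial_moment_of_mem_hypCode frame_ne (by omega) hc).imp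
      fun S hS ↦ ⟨hS.1, fun x _ ↦ hS.2 x⟩
  simp only [card_support, Finset.card_univ] at key
  refine key.trans (Nat.add_le_add_right (sum_secant_span_pair_le hg hf he ?_ ?_ heπ hS) _)
  all_goals exact hℓπ (Submodule.subset_span (by simp))

end PlaneInequality

section SmallPlaneSections

variable {F : Type} [Field F] {p n : ℕ}

lemma exists_ker_inf_eq {ℓ π : Submodule F (Fin n → F)} (hℓ : finrank F ℓ = 2)
    (hπ : finrank F π = 3) (hℓπ : ℓ ≤ π) :
    ∃ φ : Dual F (Fin n → F), φ ≠ 0 ∧ LinearMap.ker φ ⊓ π = ℓ := by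
  have ℓ_lt : ℓ < π := lt_of_le_of_ne hℓπ fun h ↦ by
    rw [h] at hℓ
    omega
  obtain ⟨e, heπ, he⟩ := SetLike.exists_of_lt ℓ_lt
  obtain ⟨φ, hφe, hℓφ⟩ := Submodule.exists_le_ker_of_notMem he
  refine ⟨φ, ne_of_apply_ne (· e) hφe,
    (Submodule.eq_of_le_of_finrank_le (le_inf hℓφ hℓπ) ?_).symm⟩
  have inf_lt : LinearMap.ker φ ⊓ π < π := inf_lt_right.mpr fun h ↦ hφe (h heπ)
  have := Submodule.finrank_lt_finrank_of_lt inf_lt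
  omega

variable [Finite F]

lemma secant_symmDiff_pointsIn_add (B : Set (ProjPoint F n)) (H W : Submodule F (Fin n → F)) :
    secant F n (symmDiff B (pointsIn F n H)) W + secant F n B (H ⊓ W) =
      secant F n B W + secant F n Bᶜ (H ⊓ W) := by
  have split_symmDiff : symmDiff B (pointsIn F n H) ∩ pointsIn F n W =
      (B ∩ pointsIn F n W) \ pointsIn F n H ∪ Bᶜ ∩ pointsIn F n (H ⊓ W) := by
    ext P
    simp only [pointsIn_inf, Set.mem_inter_iff, Set.mem_union, Set.mem_symmDiff, Set.mem_sdiff,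
      Set.mem_compl_iff]
    tauto
  have disjoint : Disjoint ((B ∩ pointsIn F n W) \ pointsIn F n H)
      (Bᶜ ∩ pointsIn F n (H ⊓ W)) :=
    Set.disjoint_left.mpr fun _ h h' ↦ h'.1 h.1.1
  have split_B : (B ∩ pointsIn F n W) ∩ pointsIn F n H = B ∩ pointsIn F n (H ⊓ W) := by
    rw [pointsIn_inf, Set.inter_assoc, Set.inter_comm (pointsIn F n W)]
  have card_B := Set.ncard_inter_add_ncard_sdiff_eq_ncard (B ∩ pointsIn F n W) (pointsIn F n H)
  rw [split_B] at card_B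
  simp only [secant]
  rw [split_symmDiff, Set.ncard_union_eq disjoint]
  omega

variable [CharP F p] {B : Set (ProjPoint F n)} {ℓ π : Submodule F (Fin n → F)} {P : ProjPoint F n}

lemma card_mul_secant_le_of_notMem (hB : charVec F p n B ∈ hypCode F p n) (hℓ : finrank F ℓ = 2)
    (hπ : finrank F π = 3) (hℓπ : ℓ ≤ π) (hP : P ∈ pointsIn F n ℓ) (hPB : P ∉ B) {s : ℕ}
    (hs : secant F n B ℓ = s) (hsq : 2 * s ≤ Nat.card F) :
    Nat.card F * s ≤ secant F n B π + s * (s - 1) := by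
  have : Fact p.Prime := ⟨CharP.char_is_prime F p⟩
  rw [← support_charVec (p := p) B] at hs hPB ⊢
  exact card_mul_secant_support_le hB hℓ hπ hℓπ hP (Function.notMem_support.mp hPB) hs hsq

-- Subtracting a hyperplane through `ℓ` complements `B` on `ℓ` and makes `P` a zero of the codeword.
lemma card_mul_secant_compl_le_of_mem (hB : charVec F p n B ∈ hypCode F p n)
    (hℓ : finrank F ℓ = 2) (hπ : finrank F π = 3) (hℓπ : ℓ ≤ π) (hP : P ∈ pointsIn F n ℓ)
    (hPB : P ∈ B) {s : ℕ} (hs : secant F n Bᶜ ℓ = s) (hsq : 2 * s ≤ Nat.card F) :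
    Nat.card F * s + secant F n B ℓ ≤ secant F n B π + s * (s - 1) + s := by
  have : Fact p.Prime := ⟨CharP.char_is_prime F p⟩
  obtain ⟨φ, hφ, rfl⟩ := exists_ker_inf_eq hℓ hπ hℓπ
  set H := LinearMap.ker φ
  set c := charVec F p n B - charVec F p n (pointsIn F n H)
  have support_c : Function.support c = symmDiff B (pointsIn F n H) :=
    support_charVec_sub_charVec B (pointsIn F n H)
  have P_notMem : P ∉ Function.support c := by
    rw [support_c, Set.mem_symmDiff]
    have : P ∈ pointsIn F n H := (mem_pointsIn.mp hP).trans inf_le_left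
    tauto
  have secant_ℓ := secant_symmDiff_pointsIn_add B H (H ⊓ π)
  have secant_π := secant_symmDiff_pointsIn_add B H π
  rw [← inf_assoc, inf_idem] at secant_ℓ
  rw [← support_c] at secant_ℓ secant_π
  have hc : c ∈ hypCode F p n := sub_mem hB (charVec_pointsIn_ker_mem_hypCode hφ)
  have key := card_mul_secant_support_le hc hℓ hπ hℓπ hP
    (Function.notMem_support.mp P_notMem) (s := s) (by omega) hsq
  omega

lemma add_mul_pred_lt_mul {q s b p : ℕ} (hp : 0 < p) (hps : 2 * p ≤ s) (hsq : 2 * s ≤ q)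
    (hb : b ≤ p * q + p) : b + s * (s - 1) < q * s := by
  obtain ⟨d, rfl⟩ := Nat.exists_eq_add_of_le hps
  obtain ⟨e, rfl⟩ := Nat.exists_eq_add_of_le hsq
  obtain ⟨s, hs⟩ := Nat.exists_eq_add_of_le' (show 1 ≤ 2 * p + d by omega)
  rw [hs, Nat.add_sub_cancel]
  nlinarith [Nat.zero_le (d * e), Nat.zero_le (p * e), Nat.zero_le (p * d), Nat.zero_le (d * d)]

lemma add_mul_pred_add_lt_mul_add {q s t b p : ℕ} (hp : 2 ≤ p) (hpq : 2 * p ^ 2 ≤ q)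
    (hps : p + 1 ≤ s) (hsq : 2 * s ≤ q) (hst : s + t = q + 1) (hb : b ≤ p * q + p) :
    b + s * (s - 1) + s < q * s + t := by
  have mul_pred_add : s * (s - 1) + s = s ^ 2 := by
    rw [sq, Nat.mul_sub_one, Nat.sub_add_cancel (Nat.le_mul_self s)]
  zify at *
  have : 0 ≤ ((s : ℤ) - (p + 1)) * (q - 2 * s) := mul_nonneg (by linarith) (by linarith)
  have : 0 ≤ ((s : ℤ) - (p + 1)) * (q - 2 * p - 4) := mul_nonneg (by linarith) (by nlinarith)
  nlinarith

lemma secant_eq_zero_or_eq_of_two_mul_le (hB : charVec F p n B ∈ hypCode F p n)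
    (hcard : p ∣ B.ncard) (hℓ : finrank F ℓ = 2) (hπ : finrank F π = 3) (hℓπ : ℓ ≤ π)
    (hb : secant F n B π ≤ p * Nat.card F + p) (hs : 2 * secant F n B ℓ ≤ Nat.card F) :
    secant F n B ℓ = 0 ∨ secant F n B ℓ = p := by
  have hp : p.Prime := CharP.char_is_prime F p
  obtain ⟨k, hk⟩ := dvd_secant_of_charVec_mem_hypCode hB hcard hℓ.ge
  obtain ⟨P, hPℓ, hPB⟩ : ∃ P ∈ pointsIn F n ℓ, P ∉ B := exists_notMem_of_secant_lt (by
    rw [ncard_pointsIn_of_finrank_eq_two hℓ]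
    omega)
  have key := card_mul_secant_le_of_notMem hB hℓ hπ hℓπ hPℓ hPB rfl hs
  have k_lt : k < 2 := by
    by_contra! hk₂
    have two_mul_le : 2 * p ≤ secant F n B ℓ := by
      rw [hk, mul_comm]
      gcongr
    exact (add_mul_pred_lt_mul hp.pos two_mul_le hs hb).not_ge key
  interval_cases k <;> omega

lemma secant_eq_card_of_lt_two_mul (hpq : 2 * p ^ 2 ≤ Nat.card F)
    (hB : charVec F p n B ∈ hypCode F p n) (hcard : p ∣ B.ncard) (hℓ : finrank F ℓ = 2)
    (hπ : finrank F π = 3) (hℓπ : ℓ ≤ π)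
    (hb : secant F n B π ≤ p * Nat.card F + p) (hs : Nat.card F < 2 * secant F n B ℓ) :
    secant F n B ℓ = Nat.card F := by
  have hp : p.Prime := CharP.char_is_prime F p
  have p_dvd_q := dvd_card_of_charP F p
  have p_dvd_s := dvd_secant_of_charVec_mem_hypCode hB hcard hℓ.ge
  have secant_compl := secant_add_secant_compl B ℓ
  rw [ncard_pointsIn_of_finrank_eq_two hℓ] at secant_compl
  have s_ne : secant F n B ℓ ≠ Nat.card F + 1 := fun h ↦
    hp.one_lt.ne' (Nat.dvd_one.mp ((Nat.dvd_add_right p_dvd_q).mp (h ▸ p_dvd_s)))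
  have q_add_p_le : Nat.card F + p ≤ 2 * secant F n B ℓ := by
    have := Nat.le_of_dvd (by omega) (Nat.dvd_sub (p_dvd_s.mul_left 2) p_dvd_q)
    omega
  by_contra hne
  have p_le : p ≤ Nat.card F - secant F n B ℓ :=
    Nat.le_of_dvd (by omega) (Nat.dvd_sub p_dvd_q p_dvd_s)
  have two_le_p := hp.two_le
  obtain ⟨P, hPℓ, hPB⟩ : ∃ P ∈ pointsIn F n ℓ, P ∈ B := exists_mem_of_secant_ne_zero (by omega)
  have two_mul_compl_le : 2 * secant F n Bᶜ ℓ ≤ Nat.card F := by omega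
  have key := card_mul_secant_compl_le_of_mem hB hℓ hπ hℓπ hPℓ hPB rfl two_mul_compl_le
  exact (add_mul_pred_add_lt_mul_add two_le_p hpq (by omega) two_mul_compl_le
    ((add_comm _ _).trans secant_compl) hb).not_ge key

lemma secant_eq_zero_or_eq_or_eq_card (hpq : 2 * p ^ 2 ≤ Nat.card F)
    (hB : charVec F p n B ∈ hypCode F p n) (hcard : p ∣ B.ncard) (hℓ : finrank F ℓ = 2)
    (hπ : finrank F π = 3) (hℓπ : ℓ ≤ π) (hb : secant F n B π ≤ p * Nat.card F + p) :
    secant F n B ℓ = 0 ∨ secant F n B ℓ = p ∨ secant F n B ℓ = Nat.card F := by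
  rcases le_or_gt (2 * secant F n B ℓ) (Nat.card F) with hs | hs
  · have := secant_eq_zero_or_eq_of_two_mul_le hB hcard hℓ hπ hℓπ hb hs
    tauto
  · exact .inr (.inr (secant_eq_card_of_lt_two_mul hpq hB hcard hℓ hπ hℓπ hb hs))

lemma exists_add_eq_card_sum_eq {ι : Type*} {T : Finset ι} {f : ι → ℕ} {a b : ℕ}
    (hf : ∀ i ∈ T, f i = a ∨ f i = b) :
    ∃ j k, j + k = T.card ∧ ∑ i ∈ T, f i = j * a + k * b := by
  refine ⟨(T.filter (f · = a)).card, (T.filter (¬ f · = a)).card,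
    Finset.card_filter_add_card_filter_not _, ?_⟩
  rw [← Finset.sum_filter_add_sum_filter_not T (f · = a),
    Finset.sum_const_nat fun i hi ↦ (Finset.mem_filter.mp hi).2,
    Finset.sum_const_nat fun i hi ↦ (hf i (Finset.mem_filter.mp hi).1).resolve_left
      (Finset.mem_filter.mp hi).2]

-- `b - p * q = (k - 1) * (q - p)` has absolute value less than `q - p`, so `k = 1`.
lemma eq_mul_of_add_eq_mul_add_mul {p q b j k : ℕ} (hp : 2 ≤ p) (hpq : 2 * p ^ 2 ≤ q)
    (hjk : j + k = q + 1) (hb : b + q = j * p + k * q) (hlower : q * p ≤ b + p * (p - 1))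
    (hupper : b ≤ p * q + p) : b = p * q := by
  have mul_pred_add : p * (p - 1) + p = p ^ 2 := by
    rw [sq, Nat.mul_sub_one, Nat.sub_add_cancel (Nat.le_mul_self p)]
  zify at *
  have b_eq : (b : ℤ) = p * q + (k - 1) * (q - p) := by
    linear_combination hb + (p : ℤ) * hjk
  have k_eq_one : (k : ℤ) = 1 := by
    have gap : (p : ℤ) < q - p := by nlinarith
    apply le_antisymm <;> by_contra! hk
    · have : (q - p : ℤ) * 1 ≤ (q - p) * (k - 1) := by gcongr <;> linarith
      linarith
    · have : (q - p : ℤ) * (k - 1) ≤ (q - p) * (-1) := by gcongr <;> linarith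
      linarith
  rw [b_eq, k_eq_one]
  ring

lemma card_mul_le_secant_add_of_mem_pencil (hB : charVec F p n B ∈ hypCode F p n)
    (hπ : finrank F π = 3) (hpq : 2 * p ≤ Nat.card F) (hℓ : ℓ ∈ pencil P π)
    (hs : secant F n B ℓ = p) : Nat.card F * p ≤ secant F n B π + p * (p - 1) := by
  obtain ⟨-, hℓπ, hℓ⟩ := mem_pencil.mp hℓ
  obtain ⟨Q, hQℓ, hQB⟩ : ∃ Q ∈ pointsIn F n ℓ, Q ∉ B := exists_notMem_of_secant_lt (by
    rw [ncard_pointsIn_of_finrank_eq_two hℓ]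
    omega)
  exact card_mul_secant_le_of_notMem hB hℓ hπ hℓπ hQℓ hQB hs hpq

lemma secant_plane_eq_zero_or_eq_mul_card (hpq : 2 * p ^ 2 ≤ Nat.card F)
    (hB : charVec F p n B ∈ hypCode F p n) (hcard : p ∣ B.ncard) (hπ : finrank F π = 3)
    (hb : secant F n B π ≤ p * Nat.card F + p) :
    secant F n B π = 0 ∨ secant F n B π = p * Nat.card F := by
  have two_le_p : 2 ≤ p := (CharP.char_is_prime F p).two_le
  have two_p_le : 2 * p ≤ Nat.card F := by nlinarith
  refine or_iff_not_imp_left.mpr fun hne ↦ ?_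
  obtain ⟨P, hPπ, hPB⟩ := exists_mem_of_secant_ne_zero hne
  have line_secant : ∀ ℓ ∈ pencil P π, secant F n B ℓ = p ∨ secant F n B ℓ = Nat.card F := by
    intro ℓ hℓ
    obtain ⟨hPℓ, hℓπ, hℓ⟩ := mem_pencil.mp hℓ
    exact (secant_eq_zero_or_eq_or_eq_card hpq hB hcard hℓ hπ hℓπ hb).resolve_left
      fun h ↦ secant_eq_zero_iff.mp h hPℓ hPB
  have sum_secant := sum_secant_pencil_of_mem hPπ hπ hPB
  obtain ⟨ℓ, hℓ, hs⟩ : ∃ ℓ ∈ pencil P π, secant F n B ℓ = p := by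
    by_contra! hnot
    rw [Finset.sum_const_nat fun ℓ hℓ ↦ (line_secant ℓ hℓ).resolve_left (hnot ℓ hℓ),
      card_pencil hPπ hπ] at sum_secant
    nlinarith
  obtain ⟨j, k, hjk, sum_eq⟩ := exists_add_eq_card_sum_eq line_secant
  exact eq_mul_of_add_eq_mul_add_mul two_le_p hpq (hjk.trans (card_pencil hPπ hπ))
    (sum_secant.symm.trans sum_eq) (card_mul_le_secant_add_of_mem_pencil hB hπ two_p_le hℓ hs) hb

end SmallPlaneSections

section LargePlaneSections

lemma IsQuasiHermitian.ncard_modEq_one {F : Type} [Field F] {p q r : ℕ}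
    {V : Set (ProjPoint F (r + 1))} (hV : IsQuasiHermitian F q r V) (hr : r ≠ 0) (hpq : p ∣ q) :
    V.ncard ≡ 1 [MOD p] := by
  have q_eq_zero : (q : ZMod p) = 0 := (ZMod.natCast_eq_zero_iff q p).mpr hpq
  have count := congrArg (Int.cast : ℤ → ZMod p) hV.1
  push_cast [q_eq_zero, zero_pow hr, zero_pow r.succ_ne_zero, zero_pow two_ne_zero] at count
  have neg_one_pow_mul_self : ((-1 : ZMod p) ^ r) * (-1) ^ r = 1 := by
    rw [← mul_pow, neg_one_mul, neg_neg, one_pow]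
  rw [← ZMod.natCast_eq_natCast_iff, Nat.cast_one]
  linear_combination -count + neg_one_pow_mul_self

variable {F : Type} [Field F] [Finite F] {p n : ℕ} [CharP F p]

lemma dvd_ncard_compl {V : Set (ProjPoint F n)} (hn : n ≠ 0) (hV : V.ncard ≡ 1 [MOD p]) :
    p ∣ Vᶜ.ncard := by
  have total := congrArg (Nat.cast : ℕ → ZMod p) (secant_add_secant_compl V ⊤)
  rw [natCast_ncard_pointsIn p (by rwa [finrank_top, finrank_fin_fun]), secant_top, secant_top,
    Nat.cast_add, (ZMod.natCast_eq_natCast_iff _ _ _).mpr hV, Nat.cast_one, add_eq_left] at total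
  exact (ZMod.natCast_eq_zero_iff _ _).mp total

theorem stmt17_general {V : Set (ProjPoint F n)} (hq : p ^ 3 ≤ Nat.card F)
    (hV : V.ncard ≡ 1 [MOD p]) (hcode : charVec F p n V ∈ hypCode F p n)
    {π : Submodule F (Fin n → F)} (hπ : finrank F π = 3)
    (hsize : Nat.card F ^ 2 - p * Nat.card F + Nat.card F - p + 1 ≤ secant F n V π) :
    pointsIn F n π ⊆ V ∨
    (secant F n V π = Nat.card F ^ 2 - p * Nat.card F + Nat.card F + 1 ∧
      ∀ ℓ : Submodule F (Fin n → F), ℓ ≤ π → finrank F ℓ = 2 →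
        secant F n V ℓ = 1 ∨ secant F n V ℓ = Nat.card F - p + 1 ∨
          secant F n V ℓ = Nat.card F + 1) := by
  have two_le_p : 2 ≤ p := (CharP.char_is_prime F p).two_le
  have hpq : 2 * p ^ 2 ≤ Nat.card F := by nlinarith
  have p_le_q : p ≤ Nat.card F := by nlinarith
  have three_le_n : 3 ≤ n := by
    have := π.finrank_le
    rwa [hπ, finrank_fin_fun] at this
  have hB : charVec F p n Vᶜ ∈ hypCode F p n := charVec_compl_mem_hypCode (by omega) hcode
  have hcard : p ∣ Vᶜ.ncard := dvd_ncard_compl (by omega) hV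
  have secant_π := secant_add_secant_compl V π
  rw [ncard_pointsIn_of_finrank_eq_three hπ] at secant_π
  have p_mul_q_le : p * Nat.card F ≤ Nat.card F ^ 2 := by nlinarith
  have hb : secant F n Vᶜ π ≤ p * Nat.card F + p := by omega
  refine (secant_plane_eq_zero_or_eq_mul_card hpq hB hcard hπ hb).imp
    (fun h ↦ compl_compl V ▸ secant_eq_zero_iff.mp h) fun h ↦ ⟨by omega, fun ℓ hℓπ hℓ ↦ ?_⟩
  have secant_ℓ := secant_add_secant_compl V ℓ
  rw [ncard_pointsIn_of_finrank_eq_two hℓ] at secant_ℓ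
  have := secant_eq_zero_or_eq_or_eq_card hpq hB hcard hℓ hπ hℓπ hb
  omega

end LargePlaneSections

/-- in PG(r, p⁴) (so `q = p²`), if a plane `π` meets `V` in at least
`p⁸ - p⁵ + p⁴ - p + 1` points, then either `π ⊆ V`, or `|π ∩ V| = p⁸ - p⁵ + p⁴ + 1`
and every line of `π` meets `π ∩ V` in `1`, `p⁴ - p + 1` or `p⁴ + 1` points. -/
theorem stmt17 (p r : ℕ) (hp : p.Prime) (hp3 : 3 < p) (hr : 4 ≤ r)
    (F : Type) [Field F] [Fintype F] (hF : Fintype.card F = p ^ 4)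
    (V : Set (ProjPoint F (r + 1))) (hV : IsQuasiHermitian F (p ^ 2) r V)
    (hcode : charVec F p (r + 1) V ∈ hypCode F p (r + 1))
    (π : Submodule F (Fin (r + 1) → F)) (hπ : finrank F π = 3)
    (hsize : p ^ 8 - p ^ 5 + p ^ 4 - p + 1 ≤ secant F (r + 1) V π) :
    pointsIn F (r + 1) π ⊆ V ∨
    (secant F (r + 1) V π = p ^ 8 - p ^ 5 + p ^ 4 + 1 ∧
      ∀ ℓ : Submodule F (Fin (r + 1) → F), ℓ ≤ π → finrank F ℓ = 2 →
        secant F (r + 1) V ℓ = 1 ∨ secant F (r + 1) V ℓ = p ^ 4 - p + 1 ∨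
          secant F (r + 1) V ℓ = p ^ 4 + 1) := by
  have : Fact p.Prime := ⟨hp⟩
  have : CharP F p := charP_of_card_eq_prime_pow hF
  have card_eq : Nat.card F = p ^ 4 := Nat.card_eq_fintype_card.trans hF
  have hcard : V.ncard ≡ 1 [MOD p] := hV.ncard_modEq_one (by omega) (dvd_pow_self p two_ne_zero)
  have hq : p ^ 3 ≤ Nat.card F := card_eq ▸ Nat.pow_le_pow_right hp.pos (by omega)
  have key := stmt17_general hq hcard hcode hπ
  rw [card_eq, ← pow_mul, ← pow_succ'] at key
  exact key hsize
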